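/- Let B be a bialgebra over K. For all p, q ≥ 1 the horizontal and vertical differentials commute: δ_c^{p,q+1} ∘ δ_h^{p,q} = δ_h^{p+1,q} ∘ δ_c^{p,q}, so that (C^{p,q}, δ_h, δ_c) is a bicomplex. -/

import Mathlib

open TensorProduct

namespace GBD

variable (K B : Type*) [Field K] [Ring B] [Bialgebra K B]

/-- The `n`-th tensor power `B^{⊗n}`. -/
abbrev T (n : ℕ) := PiTensorProduct K (fun _ : Fin n => B)

/-- Splitting off the first tensor factor: `B^{⊗(n+1)} ≃ B ⊗ B^{⊗n}`. -/
noncomputable def split (n : ℕ) : T K B (n + 1) ≃ₗ[K] B ⊗[K] T K B n :=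
  ((PiTensorProduct.reindex K (fun _ : Fin (n+1) => B)
      ((finCongr (Nat.add_comm 1 n)).symm.trans finSumFinEquiv.symm)).trans
    (PiTensorProduct.tmulEquiv K B).symm).trans
      (TensorProduct.congr (PiTensorProduct.subsingletonEquiv (0 : Fin 1))
        (LinearEquiv.refl K _))

/-- Splitting off the last tensor factor: `B^{⊗(n+1)} ≃ B^{⊗n} ⊗ B`. -/
noncomputable def splitLast (n : ℕ) : T K B (n + 1) ≃ₗ[K] T K B n ⊗[K] B :=
  ((PiTensorProduct.reindex K (fun _ : Fin (n+1) => B) finSumFinEquiv.symm).trans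
    (PiTensorProduct.tmulEquiv K B).symm).trans
      (TensorProduct.congr (LinearEquiv.refl K _)
        (PiTensorProduct.subsingletonEquiv (0 : Fin 1)))

/-- Iterated comultiplication `Δ^{(n)} : B → B^{⊗n}` (with `Δ^{(0)} = ε`, `Δ^{(1)} = Id`). -/
noncomputable def iterComul : (n : ℕ) → (B →ₗ[K] T K B n)
  | 0 => (PiTensorProduct.isEmptyEquiv (Fin 0)).symm.toLinearMap ∘ₗ
      (Coalgebra.counit (R := K) (A := B))
  | (n + 1) => (split K B n).symm.toLinearMap ∘ₗ
      LinearMap.lTensor B (iterComul n) ∘ₗ (Coalgebra.comul (R := K) (A := B))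

/-- Componentwise comultiplication `B^{⊗n} → B^{⊗n} ⊗ B^{⊗n}`,
`b¹⊗⋯⊗bⁿ ↦ (b¹₍₁₎⊗⋯⊗bⁿ₍₁₎) ⊗ (b¹₍₂₎⊗⋯⊗bⁿ₍₂₎)`. -/
noncomputable def comulT : (n : ℕ) → (T K B n →ₗ[K] T K B n ⊗[K] T K B n)
  | 0 => (TensorProduct.congr (PiTensorProduct.isEmptyEquiv (Fin 0)).symm
        (PiTensorProduct.isEmptyEquiv (Fin 0)).symm).toLinearMap ∘ₗ
      (TensorProduct.lid K K).symm.toLinearMap ∘ₗ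
        (PiTensorProduct.isEmptyEquiv (Fin 0)).toLinearMap
  | (n + 1) =>
      (TensorProduct.congr (split K B n).symm (split K B n).symm).toLinearMap ∘ₗ
        (TensorProduct.tensorTensorTensorComm K B B (T K B n) (T K B n)).toLinearMap ∘ₗ
          TensorProduct.map (Coalgebra.comul (R := K) (A := B)) (comulT n) ∘ₗ
            (split K B n).toLinearMap

/-- The product of all tensor factors, `B^{⊗n} → B`, `b¹⊗⋯⊗bⁿ ↦ b¹⋯bⁿ`. -/
noncomputable def prodT (n : ℕ) : T K B n →ₗ[K] B :=
  PiTensorProduct.lift (MultilinearMap.mkPiAlgebraFin K n B)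

/-- `μ_i : B^{⊗(q+1)} → B^{⊗q}` multiplying the `i`-th and `(i+1)`-th factors
(`i` is 0-indexed here). -/
noncomputable def mulAt : (q : ℕ) → ℕ → (T K B (q + 1) →ₗ[K] T K B q)
  | 0, _ => 0
  | (q + 1), 0 => (split K B q).symm.toLinearMap ∘ₗ
      LinearMap.rTensor (T K B q) (LinearMap.mul' K B) ∘ₗ
        (TensorProduct.assoc K B B (T K B q)).symm.toLinearMap ∘ₗ
          LinearMap.lTensor B (split K B q).toLinearMap ∘ₗ
            (split K B (q + 1)).toLinearMap
  | (q + 1), (i + 1) => (split K B q).symm.toLinearMap ∘ₗ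
      LinearMap.lTensor B (mulAt q i) ∘ₗ (split K B (q + 1)).toLinearMap

/-- `Δ_j : B^{⊗p} → B^{⊗(p+1)}` applying `Δ` to the `j`-th factor (`j` is 0-indexed). -/
noncomputable def comulAt : (p : ℕ) → ℕ → (T K B p →ₗ[K] T K B (p + 1))
  | 0, _ => 0
  | (p + 1), 0 => (split K B (p + 1)).symm.toLinearMap ∘ₗ
      LinearMap.lTensor B (split K B p).symm.toLinearMap ∘ₗ
        (TensorProduct.assoc K B B (T K B p)).toLinearMap ∘ₗ
          LinearMap.rTensor (T K B p) (Coalgebra.comul (R := K) (A := B)) ∘ₗ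
            (split K B p).toLinearMap
  | (p + 1), (i + 1) => (split K B (p + 1)).symm.toLinearMap ∘ₗ
      LinearMap.lTensor B (comulAt p i) ∘ₗ (split K B p).toLinearMap

/-- `λ^p : B^{⊗(p+1)} → B^{⊗p}`, `b¹⊗b²⊗⋯⊗b^{p+1} ↦ b¹₍₁₎b² ⊗ ⋯ ⊗ b¹₍ₚ₎b^{p+1}`. -/
noncomputable def lamMap (p : ℕ) : T K B (p + 1) →ₗ[K] T K B p :=
  LinearMap.mul' K (T K B p) ∘ₗ TensorProduct.map (iterComul K B p) LinearMap.id ∘ₗ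
    (split K B p).toLinearMap

/-- `ρ^p : B^{⊗(p+1)} → B^{⊗p}`, `b¹⊗⋯⊗b^p⊗b^{p+1} ↦ b¹b^{p+1}₍₁₎ ⊗ ⋯ ⊗ b^p b^{p+1}₍ₚ₎`. -/
noncomputable def rhoMap (p : ℕ) : T K B (p + 1) →ₗ[K] T K B p :=
  LinearMap.mul' K (T K B p) ∘ₗ TensorProduct.map LinearMap.id (iterComul K B p) ∘ₗ
    (splitLast K B p).toLinearMap

/-- `σ^q : B^{⊗q} → B^{⊗(q+1)}`, `b¹⊗⋯⊗b^q ↦ (b¹₍₁₎⋯b^q₍₁₎) ⊗ b¹₍₂₎ ⊗ ⋯ ⊗ b^q₍₂₎`. -/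
noncomputable def sigmaMap (q : ℕ) : T K B q →ₗ[K] T K B (q + 1) :=
  (split K B q).symm.toLinearMap ∘ₗ
    TensorProduct.map (prodT K B q) LinearMap.id ∘ₗ comulT K B q

/-- `τ^q : B^{⊗q} → B^{⊗(q+1)}`, `b¹⊗⋯⊗b^q ↦ b¹₍₁₎ ⊗ ⋯ ⊗ b^q₍₁₎ ⊗ (b¹₍₂₎⋯b^q₍₂₎)`. -/
noncomputable def tauMap (q : ℕ) : T K B q →ₗ[K] T K B (q + 1) :=
  (splitLast K B q).symm.toLinearMap ∘ₗ
    TensorProduct.map LinearMap.id (prodT K B q) ∘ₗ comulT K B q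

/-- The horizontal (Hochschild-type) differential
`δ_h^{p,q} : Hom(B^{⊗q}, B^{⊗p}) → Hom(B^{⊗(q+1)}, B^{⊗p})`. -/
noncomputable def deltaH (p q : ℕ) (f : T K B q →ₗ[K] T K B p) :
    T K B (q + 1) →ₗ[K] T K B p :=
  lamMap K B p ∘ₗ (split K B p).symm.toLinearMap ∘ₗ LinearMap.lTensor B f ∘ₗ
      (split K B q).toLinearMap
    + ∑ i ∈ Finset.range q, ((-1 : ℤ) ^ (i + 1)) • (f ∘ₗ mulAt K B q i)
    + ((-1 : ℤ) ^ (q + 1)) •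
        (rhoMap K B p ∘ₗ (splitLast K B p).symm.toLinearMap ∘ₗ LinearMap.rTensor B f ∘ₗ
          (splitLast K B q).toLinearMap)

/-- The vertical (coHochschild-type) differential
`δ_c^{p,q} : Hom(B^{⊗q}, B^{⊗p}) → Hom(B^{⊗q}, B^{⊗(p+1)})`. -/
noncomputable def deltaCv (p q : ℕ) (f : T K B q →ₗ[K] T K B p) :
    T K B q →ₗ[K] T K B (p + 1) :=
  (split K B p).symm.toLinearMap ∘ₗ LinearMap.lTensor B f ∘ₗ (split K B q).toLinearMap ∘ₗ
      sigmaMap K B q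
    + ∑ j ∈ Finset.range p, ((-1 : ℤ) ^ (j + 1)) • (comulAt K B p j ∘ₗ f)
    + ((-1 : ℤ) ^ (p + 1)) •
        ((splitLast K B p).symm.toLinearMap ∘ₗ LinearMap.rTensor B f ∘ₗ
          (splitLast K B q).toLinearMap ∘ₗ tauMap K B q)

section TensorPowers

variable {K B}

theorem split_tprod (n : ℕ) (v : Fin (n + 1) → B) :
    split K B n (PiTensorProduct.tprod K v) =
      v 0 ⊗ₜ PiTensorProduct.tprod K (Fin.tail v) := by
  simp only [split, LinearEquiv.trans_apply]
  erw [PiTensorProduct.reindex_tprod, PiTensorProduct.tmulEquiv_symm_apply]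
  simp only [TensorProduct.congr_tmul, LinearEquiv.refl_apply]
  erw [PiTensorProduct.subsingletonEquiv_apply_tprod]
  congr 2
  funext i
  simp only [Fin.tail]
  congr 1
  ext
  simp

theorem splitLast_tprod (n : ℕ) (v : Fin (n + 1) → B) :
    splitLast K B n (PiTensorProduct.tprod K v) =
      PiTensorProduct.tprod K (Fin.init v) ⊗ₜ v (Fin.last n) := by
  simp only [splitLast, LinearEquiv.trans_apply]
  erw [PiTensorProduct.reindex_tprod, PiTensorProduct.tmulEquiv_symm_apply]
  simp only [TensorProduct.congr_tmul, LinearEquiv.refl_apply]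
  erw [PiTensorProduct.subsingletonEquiv_apply_tprod]
  rfl

theorem split_symm_tmul_tprod (n : ℕ) (b : B) (v : Fin n → B) :
    (split K B n).symm (b ⊗ₜ PiTensorProduct.tprod K v) =
      PiTensorProduct.tprod K (Fin.cons b v : Fin (n + 1) → B) := by
  simp [LinearEquiv.symm_apply_eq, split_tprod]

theorem splitLast_symm_tprod_tmul (n : ℕ) (v : Fin n → B) (b : B) :
    (splitLast K B n).symm (PiTensorProduct.tprod K v ⊗ₜ b) =
      PiTensorProduct.tprod K (Fin.snoc v b : Fin (n + 1) → B) := by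
  simp [LinearEquiv.symm_apply_eq, splitLast_tprod]

theorem tensorPower_hom_ext {n : ℕ} {M : Type*} [AddCommMonoid M] [Module K M]
    {f g : T K B (n + 1) →ₗ[K] M}
    (h : ∀ b y, f ((split K B n).symm (b ⊗ₜ y)) = g ((split K B n).symm (b ⊗ₜ y))) : f = g := by
  have : f ∘ₗ (split K B n).symm.toLinearMap = g ∘ₗ (split K B n).symm.toLinearMap :=
    TensorProduct.ext' h
  ext1
  ext v
  simpa using LinearMap.congr_fun this (split K B n (PiTensorProduct.tprod K v))

theorem tensorPower_hom_ext_last {n : ℕ} {M : Type*} [AddCommMonoid M] [Module K M]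
    {f g : T K B (n + 1) →ₗ[K] M}
    (h : ∀ y b, f ((splitLast K B n).symm (y ⊗ₜ b)) = g ((splitLast K B n).symm (y ⊗ₜ b))) :
    f = g := by
  have : f ∘ₗ (splitLast K B n).symm.toLinearMap = g ∘ₗ (splitLast K B n).symm.toLinearMap :=
    TensorProduct.ext' h
  ext1
  ext v
  simpa using LinearMap.congr_fun this (splitLast K B n (PiTensorProduct.tprod K v))

theorem splitLast_symm_split_symm_tmul (n : ℕ) (a : B) (y : T K B n) (b : B) :
    (splitLast K B (n + 1)).symm ((split K B n).symm (a ⊗ₜ y) ⊗ₜ b) =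
      (split K B (n + 1)).symm (a ⊗ₜ (splitLast K B n).symm (y ⊗ₜ b)) := by
  induction y using PiTensorProduct.induction_on with
  | smul_tprod r v =>
    simp only [tmul_smul, ← smul_tmul', map_smul, split_symm_tmul_tprod, splitLast_symm_tprod_tmul,
      Fin.cons_snoc_eq_snoc_cons]
  | add y z hy hz => simp only [tmul_add, add_tmul, map_add, hy, hz]

theorem splitLast_symm_isEmptyEquiv_symm_tmul (b : B) :
    (splitLast K B 0).symm ((PiTensorProduct.isEmptyEquiv (Fin 0)).symm 1 ⊗ₜ b) =
      (split K B 0).symm (b ⊗ₜ (PiTensorProduct.isEmptyEquiv (Fin 0)).symm 1) := by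
  simp only [PiTensorProduct.isEmptyEquiv_symm_apply, one_smul, split_symm_tmul_tprod,
    splitLast_symm_tprod_tmul]
  congr 1
  funext i
  fin_cases i
  rfl

theorem map_mul_of_tmul {R A C : Type*} [CommSemiring R] [Semiring A] [Algebra R A]
    [Semiring C] [Algebra R C] {D : Type*} [Semiring D] [Algebra R D]
    (f : A ⊗[R] C →ₗ[R] D)
    (h : ∀ a c a' c', f ((a * a') ⊗ₜ (c * c')) = f (a ⊗ₜ c) * f (a' ⊗ₜ c'))
    (x y : A ⊗[R] C) : f (x * y) = f x * f y := by
  induction x with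
  | zero => simp
  | add x x' hx hx' => simp only [add_mul, map_add, hx, hx']
  | tmul a c =>
    induction y with
    | zero => simp
    | add y y' hy hy' => simp only [mul_add, map_add, hy, hy']
    | tmul a' c' => rw [Algebra.TensorProduct.tmul_mul_tmul, h]

theorem split_mul (n : ℕ) (x y : T K B (n + 1)) :
    split K B n (x * y) = split K B n x * split K B n y := by
  induction x using PiTensorProduct.induction_on with
  | add x x' hx hx' => simp only [add_mul, map_add, hx, hx']
  | smul_tprod r v =>
    induction y using PiTensorProduct.induction_on with
    | add y y' hy hy' => simp only [mul_add, map_add, hy, hy']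
    | smul_tprod s w =>
      simp only [smul_mul_assoc, mul_smul_comm, map_smul, PiTensorProduct.tprod_mul_tprod,
        split_tprod, Algebra.TensorProduct.tmul_mul_tmul]
      rfl

theorem splitLast_mul (n : ℕ) (x y : T K B (n + 1)) :
    splitLast K B n (x * y) = splitLast K B n x * splitLast K B n y := by
  induction x using PiTensorProduct.induction_on with
  | add x x' hx hx' => simp only [add_mul, map_add, hx, hx']
  | smul_tprod r v =>
    induction y using PiTensorProduct.induction_on with
    | add y y' hy hy' => simp only [mul_add, map_add, hy, hy']
    | smul_tprod s w =>
      simp only [smul_mul_assoc, mul_smul_comm, map_smul, PiTensorProduct.tprod_mul_tprod,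
        splitLast_tprod, Algebra.TensorProduct.tmul_mul_tmul]
      rfl

theorem split_symm_mul (n : ℕ) (x y : B ⊗[K] T K B n) :
    (split K B n).symm (x * y) = (split K B n).symm x * (split K B n).symm y := by
  simp [LinearEquiv.symm_apply_eq, split_mul]

theorem splitLast_symm_mul (n : ℕ) (x y : T K B n ⊗[K] B) :
    (splitLast K B n).symm (x * y) = (splitLast K B n).symm x * (splitLast K B n).symm y := by
  simp [LinearEquiv.symm_apply_eq, splitLast_mul]

theorem prodT_split_symm_tmul (n : ℕ) (b : B) (y : T K B n) :
    prodT K B (n + 1) ((split K B n).symm (b ⊗ₜ y)) = b * prodT K B n y := by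
  induction y using PiTensorProduct.induction_on with
  | add y z hy hz => simp only [tmul_add, map_add, mul_add, hy, hz]
  | smul_tprod r v =>
    simp [split_symm_tmul_tprod, prodT, MultilinearMap.mkPiAlgebraFin_apply]

theorem prodT_splitLast_symm_tmul (n : ℕ) (y : T K B n) (b : B) :
    prodT K B (n + 1) ((splitLast K B n).symm (y ⊗ₜ b)) = prodT K B n y * b := by
  induction y using PiTensorProduct.induction_on with
  | add y z hy hz => simp only [add_tmul, map_add, add_mul, hy, hz]
  | smul_tprod r v =>
    simp only [← smul_tmul', splitLast_symm_tprod_tmul, prodT, map_smul, PiTensorProduct.lift.tprod,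
      MultilinearMap.mkPiAlgebraFin_apply, smul_mul_assoc]
    simp [List.ofFn_succ', List.concat_eq_append, -List.ofFn_succ]

/-- The map `(M ⊗ M) × (N ⊗ N) → P ⊗ P` sending `(m ⊗ m', n ⊗ n')` to `c (m ⊗ n) ⊗ c (m' ⊗ n')`. -/
noncomputable def interchange {R M N P : Type*} [CommSemiring R] [AddCommMonoid M] [AddCommMonoid N]
    [AddCommMonoid P] [Module R M] [Module R N] [Module R P] (c : M ⊗[R] N →ₗ[R] P) :
    M ⊗[R] M →ₗ[R] N ⊗[R] N →ₗ[R] P ⊗[R] P :=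
  TensorProduct.curry
    (TensorProduct.map c c ∘ₗ (TensorProduct.tensorTensorTensorComm R M M N N).toLinearMap)

theorem interchange_tmul {R M N P : Type*} [CommSemiring R] [AddCommMonoid M] [AddCommMonoid N]
    [AddCommMonoid P] [Module R M] [Module R N] [Module R P] (c : M ⊗[R] N →ₗ[R] P)
    (m m' : M) (n n' : N) :
    interchange c (m ⊗ₜ m') (n ⊗ₜ n') = c (m ⊗ₜ n) ⊗ₜ c (m' ⊗ₜ n') := rfl

theorem iterComul_succ_apply (n : ℕ) (b : B) :
    iterComul K B (n + 1) b = (split K B n).symm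
      (LinearMap.lTensor B (iterComul K B n) (Coalgebra.comul b)) := rfl

theorem iterComul_succ_apply_last (n : ℕ) (b : B) :
    iterComul K B (n + 1) b = (splitLast K B n).symm
      (LinearMap.rTensor B (iterComul K B n) (Coalgebra.comul b)) := by
  induction n generalizing b with
  | zero =>
    have h₁ : LinearMap.lTensor B (iterComul K B 0) (Coalgebra.comul b) =
        b ⊗ₜ (PiTensorProduct.isEmptyEquiv (Fin 0)).symm 1 := by
      rw [iterComul, LinearMap.lTensor_comp, LinearMap.comp_apply,
        Coalgebra.lTensor_counit_comul, LinearMap.lTensor_tmul]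
      rfl
    have h₂ : LinearMap.rTensor B (iterComul K B 0) (Coalgebra.comul b) =
        (PiTensorProduct.isEmptyEquiv (Fin 0)).symm 1 ⊗ₜ b := by
      rw [iterComul, LinearMap.rTensor_comp, LinearMap.comp_apply,
        Coalgebra.rTensor_counit_comul, LinearMap.rTensor_tmul]
      rfl
    rw [iterComul_succ_apply, h₁, h₂, splitLast_symm_isEmptyEquiv_symm_tmul]
  | succ n ih =>
    have hl : LinearMap.lTensor B (iterComul K B (n + 1)) (Coalgebra.comul b) =
        LinearMap.lTensor B ((splitLast K B n).symm.toLinearMap ∘ₗ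
          LinearMap.rTensor B (iterComul K B n))
          (LinearMap.lTensor B Coalgebra.comul (Coalgebra.comul (R := K) b)) := by
      rw [← LinearMap.lTensor_comp_apply]
      congr 2
      exact LinearMap.ext ih
    have hr : LinearMap.rTensor B (iterComul K B (n + 1)) (Coalgebra.comul b) =
        LinearMap.rTensor B ((split K B n).symm.toLinearMap ∘ₗ
          LinearMap.lTensor B (iterComul K B n))
          (LinearMap.rTensor B Coalgebra.comul (Coalgebra.comul (R := K) b)) := by
      rw [← LinearMap.rTensor_comp_apply]
      rfl
    rw [iterComul_succ_apply, hl, hr, ← Coalgebra.coassoc_apply]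
    generalize LinearMap.rTensor B Coalgebra.comul (Coalgebra.comul (R := K) b) = z
    induction z with
    | zero => simp
    | add z w hz hw => simp only [map_add, hz, hw]
    | tmul z c =>
      induction z with
      | zero => simp
      | add z w hz hw => simp only [add_tmul, map_add, hz, hw]
      | tmul a b => simp [splitLast_symm_split_symm_tmul]

theorem comulT_split_symm_tmul (n : ℕ) (b : B) (y : T K B n) :
    comulT K B (n + 1) ((split K B n).symm (b ⊗ₜ y)) =
      interchange (split K B n).symm.toLinearMap (Coalgebra.comul b) (comulT K B n y) := by
  simp only [comulT, LinearMap.comp_apply, LinearEquiv.coe_coe, LinearEquiv.apply_symm_apply,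
    TensorProduct.map_tmul]
  rfl

theorem comulT_zero_apply :
    comulT K B 0 ((PiTensorProduct.isEmptyEquiv (Fin 0)).symm 1) =
      (PiTensorProduct.isEmptyEquiv (Fin 0)).symm 1 ⊗ₜ
        (PiTensorProduct.isEmptyEquiv (Fin 0)).symm 1 := by
  simp only [comulT, LinearMap.comp_apply, LinearEquiv.coe_coe, LinearEquiv.apply_symm_apply,
    TensorProduct.lid_symm_apply, TensorProduct.congr_tmul]

theorem comulT_splitLast_symm_tmul (n : ℕ) (y : T K B n) (b : B) :
    comulT K B (n + 1) ((splitLast K B n).symm (y ⊗ₜ b)) =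
      interchange (splitLast K B n).symm.toLinearMap (comulT K B n y) (Coalgebra.comul b) := by
  induction n with
  | zero =>
    obtain ⟨r, rfl⟩ :=
      (PiTensorProduct.isEmptyEquiv (R := K) (s := fun _ => B) (Fin 0)).symm.surjective y
    have hr : (PiTensorProduct.isEmptyEquiv (R := K) (s := fun _ => B) (Fin 0)).symm r =
        r • (PiTensorProduct.isEmptyEquiv (R := K) (s := fun _ => B) (Fin 0)).symm 1 := by
      rw [← map_smul, smul_eq_mul, mul_one]
    rw [hr, ← smul_tmul', LinearEquiv.map_smul, LinearMap.map_smul, LinearMap.map_smul,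
      LinearMap.map_smul, LinearMap.smul_apply, splitLast_symm_isEmptyEquiv_symm_tmul,
      comulT_split_symm_tmul, comulT_zero_apply]
    congr 1
    generalize Coalgebra.comul (R := K) b = z
    induction z with
    | zero => simp only [LinearMap.map_zero, LinearMap.zero_apply]
    | add z w hz hw => simp only [LinearMap.map_add, LinearMap.add_apply, hz, hw]
    | tmul c d =>
      simp only [interchange_tmul, LinearEquiv.coe_coe, splitLast_symm_isEmptyEquiv_symm_tmul]
  | succ n ih =>
    obtain ⟨z, rfl⟩ := (split K B n).symm.surjective y
    induction z with
    | zero => simp only [LinearEquiv.map_zero, LinearMap.map_zero, LinearMap.zero_apply, zero_tmul]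
    | add z w hz hw =>
      simp only [add_tmul, LinearEquiv.map_add, LinearMap.map_add, LinearMap.add_apply, hz, hw]
    | tmul a y =>
      rw [splitLast_symm_split_symm_tmul, comulT_split_symm_tmul, ih, comulT_split_symm_tmul]
      generalize Coalgebra.comul (R := K) b = u
      generalize Coalgebra.comul (R := K) a = v
      generalize comulT K B n y = w
      induction u with
      | zero => simp only [LinearMap.map_zero]
      | add u u' hu hu' => simp only [LinearMap.map_add, hu, hu']
      | tmul b₁ b₂ =>
        induction v with
        | zero => simp only [LinearMap.map_zero, LinearMap.zero_apply]
        | add v v' hv hv' => simp only [LinearMap.map_add, LinearMap.add_apply, hv, hv']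
        | tmul a₁ a₂ =>
          induction w with
          | zero => simp only [LinearMap.map_zero, LinearMap.zero_apply]
          | add w w' hw hw' => simp only [LinearMap.map_add, LinearMap.add_apply, hw, hw']
          | tmul y₁ y₂ =>
            simp only [interchange_tmul, LinearEquiv.coe_coe, splitLast_symm_split_symm_tmul]

theorem mulAt_zero_apply (n : ℕ) (a b : B) (y : T K B n) :
    mulAt K B (n + 1) 0 ((split K B (n + 1)).symm (a ⊗ₜ (split K B n).symm (b ⊗ₜ y))) =
      (split K B n).symm ((a * b) ⊗ₜ y) := by
  simp [mulAt]

theorem mulAt_succ_apply (n i : ℕ) (b : B) (y : T K B (n + 1)) :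
    mulAt K B (n + 1) (i + 1) ((split K B (n + 1)).symm (b ⊗ₜ y)) =
      (split K B n).symm (b ⊗ₜ mulAt K B n i y) := by
  simp [mulAt]

theorem prodT_comp_mulAt {n i : ℕ} (h : i < n) :
    prodT K B n ∘ₗ mulAt K B n i = prodT K B (n + 1) := by
  induction n generalizing i with
  | zero => omega
  | succ n ih =>
    refine tensorPower_hom_ext fun b y => ?_
    cases i with
    | zero =>
      obtain ⟨z, rfl⟩ := (split K B n).symm.surjective y
      induction z with
      | zero => simp
      | add z w hz hw => simp only [tmul_add, map_add, hz, hw]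
      | tmul a y =>
        simp only [LinearMap.comp_apply, mulAt_zero_apply, prodT_split_symm_tmul, mul_assoc]
    | succ i =>
      have := LinearMap.congr_fun (ih (i := i) (by omega)) y
      simp only [LinearMap.comp_apply] at this
      simp only [LinearMap.comp_apply, mulAt_succ_apply, prodT_split_symm_tmul, this]

theorem comulT_comp_mulAt {n i : ℕ} (h : i < n) :
    comulT K B n ∘ₗ mulAt K B n i =
      TensorProduct.map (mulAt K B n i) (mulAt K B n i) ∘ₗ comulT K B (n + 1) := by
  induction n generalizing i with
  | zero => omega
  | succ n ih =>
    refine tensorPower_hom_ext fun b y => ?_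
    cases i with
    | zero =>
      obtain ⟨z, rfl⟩ := (split K B n).symm.surjective y
      induction z with
      | zero => simp only [tmul_zero, LinearEquiv.map_zero, LinearMap.map_zero]
      | add z w hz hw => simp only [tmul_add, LinearEquiv.map_add, LinearMap.map_add, hz, hw]
      | tmul a y =>
        simp only [LinearMap.comp_apply, mulAt_zero_apply, comulT_split_symm_tmul,
          Bialgebra.comul_mul]
        generalize Coalgebra.comul (R := K) b = u
        generalize Coalgebra.comul (R := K) a = v
        generalize comulT K B n y = w
        induction u with
        | zero => simp only [LinearMap.map_zero, LinearMap.zero_apply, zero_mul]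
        | add u u' hu hu' => simp only [add_mul, LinearMap.map_add, LinearMap.add_apply, hu, hu']
        | tmul b₁ b₂ =>
          induction v with
          | zero => simp only [LinearMap.map_zero, LinearMap.zero_apply, mul_zero]
          | add v v' hv hv' => simp only [mul_add, LinearMap.map_add, LinearMap.add_apply, hv, hv']
          | tmul a₁ a₂ =>
            induction w with
            | zero => simp only [LinearMap.map_zero]
            | add w w' hw hw' => simp only [LinearMap.map_add, hw, hw']
            | tmul y₁ y₂ =>
              simp only [interchange_tmul, LinearEquiv.coe_coe, map_tmul,
                Algebra.TensorProduct.tmul_mul_tmul, mulAt_zero_apply]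
    | succ i =>
      have := LinearMap.congr_fun (ih (i := i) (by omega)) y
      simp only [LinearMap.comp_apply] at this
      simp only [LinearMap.comp_apply, mulAt_succ_apply, comulT_split_symm_tmul, this]
      generalize Coalgebra.comul (R := K) b = u
      generalize comulT K B (n + 1) y = w
      induction u with
      | zero => simp only [LinearMap.map_zero, LinearMap.zero_apply]
      | add u u' hu hu' => simp only [LinearMap.map_add, LinearMap.add_apply, hu, hu']
      | tmul b₁ b₂ =>
        induction w with
        | zero => simp only [LinearMap.map_zero]
        | add w w' hw hw' => simp only [LinearMap.map_add, hw, hw']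
        | tmul y₁ y₂ =>
          simp only [interchange_tmul, LinearEquiv.coe_coe, map_tmul, mulAt_succ_apply]

theorem comulAt_zero_apply (n : ℕ) (b : B) (y : T K B n) :
    comulAt K B (n + 1) 0 ((split K B n).symm (b ⊗ₜ y)) =
      (split K B (n + 1)).symm (LinearMap.lTensor B (split K B n).symm.toLinearMap
        (TensorProduct.assoc K B B (T K B n) (Coalgebra.comul b ⊗ₜ y))) := by
  simp [comulAt]

theorem comulAt_succ_apply (n j : ℕ) (b : B) (y : T K B n) :
    comulAt K B (n + 1) (j + 1) ((split K B n).symm (b ⊗ₜ y)) =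
      (split K B (n + 1)).symm (b ⊗ₜ comulAt K B n j y) := by
  simp [comulAt]

theorem comulAt_mul {n j : ℕ} (h : j < n) (x y : T K B n) :
    comulAt K B n j (x * y) = comulAt K B n j x * comulAt K B n j y := by
  induction n generalizing j with
  | zero => omega
  | succ n ih =>
    obtain ⟨x, rfl⟩ := (split K B n).symm.surjective x
    obtain ⟨y, rfl⟩ := (split K B n).symm.surjective y
    rw [← split_symm_mul]
    refine map_mul_of_tmul (comulAt K B (n + 1) j ∘ₗ (split K B n).symm.toLinearMap)
      (fun a c a' c' => ?_) x y
    simp only [LinearMap.comp_apply, LinearEquiv.coe_coe]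
    cases j with
    | zero =>
      simp only [comulAt_zero_apply, Bialgebra.comul_mul, ← split_symm_mul]
      congr 1
      generalize Coalgebra.comul (R := K) a = u
      generalize Coalgebra.comul (R := K) a' = v
      induction u with
      | zero => simp
      | add u u' hu hu' => simp only [add_mul, add_tmul, map_add, hu, hu']
      | tmul b₁ b₂ =>
        induction v with
        | zero => simp
        | add v v' hv hv' => simp only [mul_add, add_tmul, map_add, hv, hv']
        | tmul a₁ a₂ =>
          simp only [Algebra.TensorProduct.tmul_mul_tmul, assoc_tmul, LinearMap.lTensor_tmul,
            LinearEquiv.coe_coe, ← split_symm_mul]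
    | succ j =>
      simp only [comulAt_succ_apply, ← split_symm_mul, Algebra.TensorProduct.tmul_mul_tmul,
        ih (j := j) (by omega)]

theorem comulAt_iterComul {n j : ℕ} (h : j < n) (b : B) :
    comulAt K B n j (iterComul K B n b) = iterComul K B (n + 1) b := by
  induction n generalizing j b with
  | zero => omega
  | succ n ih =>
    cases j with
    | zero =>
      have hl : LinearMap.lTensor B (iterComul K B (n + 1)) (Coalgebra.comul b) =
          LinearMap.lTensor B ((split K B n).symm.toLinearMap ∘ₗ
            LinearMap.lTensor B (iterComul K B n))
            (LinearMap.lTensor B Coalgebra.comul (Coalgebra.comul (R := K) b)) := by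
        rw [← LinearMap.lTensor_comp_apply]
        rfl
      rw [iterComul_succ_apply (n + 1), hl, ← Coalgebra.coassoc_apply, iterComul_succ_apply]
      generalize Coalgebra.comul (R := K) b = z
      induction z with
      | zero => simp
      | add z w hz hw => simp only [map_add, hz, hw]
      | tmul a b =>
        simp only [LinearMap.lTensor_tmul, LinearMap.rTensor_tmul, comulAt_zero_apply]
        generalize Coalgebra.comul (R := K) a = z
        induction z with
        | zero => simp
        | add z w hz hw => simp only [add_tmul, map_add, hz, hw]
        | tmul a c => simp
    | succ j =>
      rw [iterComul_succ_apply, iterComul_succ_apply]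
      generalize Coalgebra.comul (R := K) b = z
      induction z with
      | zero => simp
      | add z w hz hw => simp only [map_add, hz, hw]
      | tmul a b =>
        simp only [LinearMap.lTensor_tmul, comulAt_succ_apply, ih (j := j) (by omega)]

/-- The first term of `deltaH`, as a linear map in the cochain. -/
noncomputable def deltaHLeft (p q : ℕ) :
    (T K B q →ₗ[K] T K B p) →ₗ[K] (T K B (q + 1) →ₗ[K] T K B p) where
  toFun f := LinearMap.mul' K (T K B p) ∘ₗ TensorProduct.map (iterComul K B p) f ∘ₗ
    (split K B q).toLinearMap
  map_add' f g := by
    rw [TensorProduct.map_add_right, LinearMap.add_comp, LinearMap.comp_add]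
  map_smul' r f := by
    rw [TensorProduct.map_smul_right, LinearMap.smul_comp, LinearMap.comp_smul, RingHom.id_apply]

/-- The last term of `deltaH` up to sign, as a linear map in the cochain. -/
noncomputable def deltaHRight (p q : ℕ) :
    (T K B q →ₗ[K] T K B p) →ₗ[K] (T K B (q + 1) →ₗ[K] T K B p) where
  toFun f := LinearMap.mul' K (T K B p) ∘ₗ TensorProduct.map f (iterComul K B p) ∘ₗ
    (splitLast K B q).toLinearMap
  map_add' f g := by
    rw [TensorProduct.map_add_left, LinearMap.add_comp, LinearMap.comp_add]
  map_smul' r f := by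
    rw [TensorProduct.map_smul_left, LinearMap.smul_comp, LinearMap.comp_smul, RingHom.id_apply]

/-- The first term of `deltaCv`, as a linear map in the cochain. -/
noncomputable def deltaCvLeft (p q : ℕ) :
    (T K B q →ₗ[K] T K B p) →ₗ[K] (T K B q →ₗ[K] T K B (p + 1)) where
  toFun f := (split K B p).symm.toLinearMap ∘ₗ TensorProduct.map (prodT K B q) f ∘ₗ comulT K B q
  map_add' f g := by
    rw [TensorProduct.map_add_right, LinearMap.add_comp, LinearMap.comp_add]
  map_smul' r f := by
    rw [TensorProduct.map_smul_right, LinearMap.smul_comp, LinearMap.comp_smul, RingHom.id_apply]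

/-- The last term of `deltaCv` up to sign, as a linear map in the cochain. -/
noncomputable def deltaCvRight (p q : ℕ) :
    (T K B q →ₗ[K] T K B p) →ₗ[K] (T K B q →ₗ[K] T K B (p + 1)) where
  toFun f := (splitLast K B p).symm.toLinearMap ∘ₗ TensorProduct.map f (prodT K B q) ∘ₗ
    comulT K B q
  map_add' f g := by
    rw [TensorProduct.map_add_left, LinearMap.add_comp, LinearMap.comp_add]
  map_smul' r f := by
    rw [TensorProduct.map_smul_left, LinearMap.smul_comp, LinearMap.comp_smul, RingHom.id_apply]

theorem deltaHLeft_apply {p q : ℕ} (f : T K B q →ₗ[K] T K B p) (b : B) (y : T K B q) :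
    deltaHLeft p q f ((split K B q).symm (b ⊗ₜ y)) = iterComul K B p b * f y := by
  simp only [deltaHLeft, LinearMap.coe_mk, AddHom.coe_mk, LinearMap.comp_apply,
    LinearEquiv.coe_coe, LinearEquiv.apply_symm_apply, TensorProduct.map_tmul,
    LinearMap.mul'_apply]

theorem deltaHRight_apply {p q : ℕ} (f : T K B q →ₗ[K] T K B p) (y : T K B q) (b : B) :
    deltaHRight p q f ((splitLast K B q).symm (y ⊗ₜ b)) = f y * iterComul K B p b := by
  simp only [deltaHRight, LinearMap.coe_mk, AddHom.coe_mk, LinearMap.comp_apply,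
    LinearEquiv.coe_coe, LinearEquiv.apply_symm_apply, TensorProduct.map_tmul,
    LinearMap.mul'_apply]

theorem deltaCvLeft_apply {p q : ℕ} (f : T K B q →ₗ[K] T K B p) (y : T K B q) :
    deltaCvLeft p q f y =
      (split K B p).symm (TensorProduct.map (prodT K B q) f (comulT K B q y)) := rfl

theorem deltaCvRight_apply {p q : ℕ} (f : T K B q →ₗ[K] T K B p) (y : T K B q) :
    deltaCvRight p q f y =
      (splitLast K B p).symm (TensorProduct.map f (prodT K B q) (comulT K B q y)) := rfl

theorem deltaH_eq (p q : ℕ) (f : T K B q →ₗ[K] T K B p) :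
    deltaH K B p q f = deltaHLeft p q f
      + ∑ i ∈ Finset.range q, ((-1 : K) ^ (i + 1)) • (f ∘ₗ mulAt K B q i)
      + ((-1 : K) ^ (q + 1)) • deltaHRight p q f := by
  have hl : lamMap K B p ∘ₗ (split K B p).symm.toLinearMap ∘ₗ LinearMap.lTensor B f ∘ₗ
      (split K B q).toLinearMap = deltaHLeft p q f :=
    tensorPower_hom_ext fun b y => by
      simp only [deltaHLeft_apply, lamMap, LinearMap.comp_apply, LinearEquiv.coe_coe,
        LinearEquiv.apply_symm_apply, LinearMap.lTensor_tmul, TensorProduct.map_tmul,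
        LinearMap.mul'_apply, LinearMap.id_apply]
  have hr : rhoMap K B p ∘ₗ (splitLast K B p).symm.toLinearMap ∘ₗ LinearMap.rTensor B f ∘ₗ
      (splitLast K B q).toLinearMap = deltaHRight p q f :=
    tensorPower_hom_ext_last fun y b => by
      simp only [deltaHRight_apply, rhoMap, LinearMap.comp_apply, LinearEquiv.coe_coe,
        LinearEquiv.apply_symm_apply, LinearMap.rTensor_tmul, TensorProduct.map_tmul,
        LinearMap.mul'_apply, LinearMap.id_apply]
  simp only [deltaH, hl, hr, ← Int.cast_smul_eq_zsmul K, Int.cast_pow, Int.cast_neg,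
    Int.cast_one]

theorem deltaCv_eq (p q : ℕ) (f : T K B q →ₗ[K] T K B p) :
    deltaCv K B p q f = deltaCvLeft p q f
      + ∑ j ∈ Finset.range p, ((-1 : K) ^ (j + 1)) • (comulAt K B p j ∘ₗ f)
      + ((-1 : K) ^ (p + 1)) • deltaCvRight p q f := by
  have hl : (split K B p).symm.toLinearMap ∘ₗ LinearMap.lTensor B f ∘ₗ
      (split K B q).toLinearMap ∘ₗ sigmaMap K B q = deltaCvLeft p q f :=
    LinearMap.ext fun y => by
      simp only [deltaCvLeft_apply, sigmaMap, LinearMap.comp_apply, LinearEquiv.coe_coe,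
        LinearEquiv.apply_symm_apply, LinearMap.lTensor_map, LinearMap.comp_id]
  have hr : (splitLast K B p).symm.toLinearMap ∘ₗ LinearMap.rTensor B f ∘ₗ
      (splitLast K B q).toLinearMap ∘ₗ tauMap K B q = deltaCvRight p q f :=
    LinearMap.ext fun y => by
      simp only [deltaCvRight_apply, tauMap, LinearMap.comp_apply, LinearEquiv.coe_coe,
        LinearEquiv.apply_symm_apply, LinearMap.rTensor_map, LinearMap.comp_id]
  simp only [deltaCv, hl, hr, ← Int.cast_smul_eq_zsmul K, Int.cast_pow, Int.cast_neg,
    Int.cast_one]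

theorem deltaCvLeft_comp_mulAt {p q i : ℕ} (h : i < q) (f : T K B q →ₗ[K] T K B p) :
    deltaCvLeft p (q + 1) (f ∘ₗ mulAt K B q i) = deltaCvLeft p q f ∘ₗ mulAt K B q i := by
  refine LinearMap.ext fun x => ?_
  rw [LinearMap.comp_apply, deltaCvLeft_apply, deltaCvLeft_apply,
    ← LinearMap.comp_apply (comulT K B q), comulT_comp_mulAt h, LinearMap.comp_apply,
    TensorProduct.map_map, prodT_comp_mulAt h]

theorem deltaCvRight_comp_mulAt {p q i : ℕ} (h : i < q) (f : T K B q →ₗ[K] T K B p) :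
    deltaCvRight p (q + 1) (f ∘ₗ mulAt K B q i) = deltaCvRight p q f ∘ₗ mulAt K B q i := by
  refine LinearMap.ext fun x => ?_
  rw [LinearMap.comp_apply, deltaCvRight_apply, deltaCvRight_apply,
    ← LinearMap.comp_apply (comulT K B q), comulT_comp_mulAt h, LinearMap.comp_apply,
    TensorProduct.map_map, prodT_comp_mulAt h]

theorem deltaHLeft_comulAt_comp {p q j : ℕ} (h : j < p) (f : T K B q →ₗ[K] T K B p) :
    deltaHLeft (p + 1) q (comulAt K B p j ∘ₗ f) = comulAt K B p j ∘ₗ deltaHLeft p q f :=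
  tensorPower_hom_ext fun b y => by
    rw [LinearMap.comp_apply, deltaHLeft_apply, deltaHLeft_apply, comulAt_mul h,
      comulAt_iterComul h, LinearMap.comp_apply]

theorem deltaHRight_comulAt_comp {p q j : ℕ} (h : j < p) (f : T K B q →ₗ[K] T K B p) :
    deltaHRight (p + 1) q (comulAt K B p j ∘ₗ f) = comulAt K B p j ∘ₗ deltaHRight p q f :=
  tensorPower_hom_ext_last fun y b => by
    rw [LinearMap.comp_apply, deltaHRight_apply, deltaHRight_apply, comulAt_mul h,
      comulAt_iterComul h, LinearMap.comp_apply]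

theorem deltaCvLeft_deltaHLeft (p q : ℕ) (f : T K B q →ₗ[K] T K B p) :
    deltaCvLeft p (q + 1) (deltaHLeft p q f) = deltaHLeft (p + 1) q (deltaCvLeft p q f) := by
  refine tensorPower_hom_ext fun b y => ?_
  rw [deltaCvLeft_apply, deltaHLeft_apply, deltaCvLeft_apply, comulT_split_symm_tmul,
    iterComul_succ_apply, ← split_symm_mul]
  congr 1
  generalize Coalgebra.comul (R := K) b = u
  generalize comulT K B q y = w
  induction u with
  | zero => simp only [LinearMap.map_zero, LinearMap.zero_apply, zero_mul]
  | add u u' hu hu' => simp only [LinearMap.map_add, LinearMap.add_apply, add_mul, hu, hu']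
  | tmul b₁ b₂ =>
    induction w with
    | zero => simp only [LinearMap.map_zero, mul_zero]
    | add w w' hw hw' => simp only [LinearMap.map_add, mul_add, hw, hw']
    | tmul y₁ y₂ =>
      simp only [interchange_tmul, LinearEquiv.coe_coe, TensorProduct.map_tmul,
        LinearMap.lTensor_tmul, Algebra.TensorProduct.tmul_mul_tmul, prodT_split_symm_tmul,
        deltaHLeft_apply]

theorem deltaCvRight_deltaHLeft (p q : ℕ) (f : T K B q →ₗ[K] T K B p) :
    deltaCvRight p (q + 1) (deltaHLeft p q f) = deltaHLeft (p + 1) q (deltaCvRight p q f) := by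
  refine tensorPower_hom_ext fun b y => ?_
  rw [deltaCvRight_apply, deltaHLeft_apply, deltaCvRight_apply, comulT_split_symm_tmul,
    iterComul_succ_apply_last, ← splitLast_symm_mul]
  congr 1
  generalize Coalgebra.comul (R := K) b = u
  generalize comulT K B q y = w
  induction u with
  | zero => simp only [LinearMap.map_zero, LinearMap.zero_apply, zero_mul]
  | add u u' hu hu' => simp only [LinearMap.map_add, LinearMap.add_apply, add_mul, hu, hu']
  | tmul b₁ b₂ =>
    induction w with
    | zero => simp only [LinearMap.map_zero, mul_zero]
    | add w w' hw hw' => simp only [LinearMap.map_add, mul_add, hw, hw']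
    | tmul y₁ y₂ =>
      simp only [interchange_tmul, LinearEquiv.coe_coe, TensorProduct.map_tmul,
        LinearMap.rTensor_tmul, Algebra.TensorProduct.tmul_mul_tmul, prodT_split_symm_tmul,
        deltaHLeft_apply]

theorem deltaCvLeft_deltaHRight (p q : ℕ) (f : T K B q →ₗ[K] T K B p) :
    deltaCvLeft p (q + 1) (deltaHRight p q f) = deltaHRight (p + 1) q (deltaCvLeft p q f) := by
  refine tensorPower_hom_ext_last fun y b => ?_
  rw [deltaCvLeft_apply, deltaHRight_apply, deltaCvLeft_apply, comulT_splitLast_symm_tmul,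
    iterComul_succ_apply, ← split_symm_mul]
  congr 1
  generalize Coalgebra.comul (R := K) b = u
  generalize comulT K B q y = w
  induction u with
  | zero => simp only [LinearMap.map_zero, mul_zero]
  | add u u' hu hu' => simp only [LinearMap.map_add, mul_add, hu, hu']
  | tmul b₁ b₂ =>
    induction w with
    | zero => simp only [LinearMap.map_zero, LinearMap.zero_apply, zero_mul]
    | add w w' hw hw' => simp only [LinearMap.map_add, LinearMap.add_apply, add_mul, hw, hw']
    | tmul y₁ y₂ =>
      simp only [interchange_tmul, LinearEquiv.coe_coe, TensorProduct.map_tmul,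
        LinearMap.lTensor_tmul, Algebra.TensorProduct.tmul_mul_tmul, prodT_splitLast_symm_tmul,
        deltaHRight_apply]

theorem deltaCvRight_deltaHRight (p q : ℕ) (f : T K B q →ₗ[K] T K B p) :
    deltaCvRight p (q + 1) (deltaHRight p q f) = deltaHRight (p + 1) q (deltaCvRight p q f) := by
  refine tensorPower_hom_ext_last fun y b => ?_
  rw [deltaCvRight_apply, deltaHRight_apply, deltaCvRight_apply, comulT_splitLast_symm_tmul,
    iterComul_succ_apply_last, ← splitLast_symm_mul]
  congr 1
  generalize Coalgebra.comul (R := K) b = u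
  generalize comulT K B q y = w
  induction u with
  | zero => simp only [LinearMap.map_zero, mul_zero]
  | add u u' hu hu' => simp only [LinearMap.map_add, mul_add, hu, hu']
  | tmul b₁ b₂ =>
    induction w with
    | zero => simp only [LinearMap.map_zero, LinearMap.zero_apply, zero_mul]
    | add w w' hw hw' => simp only [LinearMap.map_add, LinearMap.add_apply, add_mul, hw, hw']
    | tmul y₁ y₂ =>
      simp only [interchange_tmul, LinearEquiv.coe_coe, TensorProduct.map_tmul,
        LinearMap.rTensor_tmul, Algebra.TensorProduct.tmul_mul_tmul, prodT_splitLast_symm_tmul,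
        deltaHRight_apply]

end TensorPowers

/-- For all `p, q ≥ 1`, the horizontal and vertical differentials
commute: `δ_c^{p,q+1} ∘ δ_h^{p,q} = δ_h^{p+1,q} ∘ δ_c^{p,q}`, so `(C^{p,q}, δ_h, δ_c)`
is a bicomplex. -/
theorem deltaCv_deltaH_comm (p q : ℕ) (hp : 1 ≤ p) (hq : 1 ≤ q)
    (f : T K B q →ₗ[K] T K B p) :
    deltaCv K B p (q + 1) (deltaH K B p q f) = deltaH K B (p + 1) q (deltaCv K B p q f) := by
  have hcl : ∑ i ∈ Finset.range q, ((-1 : K) ^ (i + 1)) •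
      deltaCvLeft p (q + 1) (f ∘ₗ mulAt K B q i) =
      ∑ i ∈ Finset.range q, ((-1 : K) ^ (i + 1)) • (deltaCvLeft p q f ∘ₗ mulAt K B q i) :=
    Finset.sum_congr rfl fun i hi => by rw [deltaCvLeft_comp_mulAt (Finset.mem_range.mp hi)]
  have hcr : ∑ i ∈ Finset.range q, ((-1 : K) ^ (i + 1)) •
      deltaCvRight p (q + 1) (f ∘ₗ mulAt K B q i) =
      ∑ i ∈ Finset.range q, ((-1 : K) ^ (i + 1)) • (deltaCvRight p q f ∘ₗ mulAt K B q i) :=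
    Finset.sum_congr rfl fun i hi => by rw [deltaCvRight_comp_mulAt (Finset.mem_range.mp hi)]
  have hhl : ∑ j ∈ Finset.range p, ((-1 : K) ^ (j + 1)) •
      deltaHLeft (p + 1) q (comulAt K B p j ∘ₗ f) =
      ∑ j ∈ Finset.range p, ((-1 : K) ^ (j + 1)) • (comulAt K B p j ∘ₗ deltaHLeft p q f) :=
    Finset.sum_congr rfl fun j hj => by rw [deltaHLeft_comulAt_comp (Finset.mem_range.mp hj)]
  have hhr : ∑ j ∈ Finset.range p, ((-1 : K) ^ (j + 1)) •
      deltaHRight (p + 1) q (comulAt K B p j ∘ₗ f) =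
      ∑ j ∈ Finset.range p, ((-1 : K) ^ (j + 1)) • (comulAt K B p j ∘ₗ deltaHRight p q f) :=
    Finset.sum_congr rfl fun j hj => by rw [deltaHRight_comulAt_comp (Finset.mem_range.mp hj)]
  have hmid : ∑ j ∈ Finset.range p, ((-1 : K) ^ (j + 1)) •
      (comulAt K B p j ∘ₗ ∑ i ∈ Finset.range q, ((-1 : K) ^ (i + 1)) • (f ∘ₗ mulAt K B q i)) =
      ∑ i ∈ Finset.range q, ((-1 : K) ^ (i + 1)) •
        ((∑ j ∈ Finset.range p, ((-1 : K) ^ (j + 1)) • (comulAt K B p j ∘ₗ f)) ∘ₗ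
          mulAt K B q i) := by
    refine LinearMap.ext fun x => ?_
    simp only [LinearMap.sum_apply, LinearMap.smul_apply, LinearMap.comp_apply, map_sum,
      map_smul, Finset.smul_sum]
    rw [Finset.sum_comm]
    exact Finset.sum_congr rfl fun i _ => Finset.sum_congr rfl fun j _ => smul_comm _ _ _
  have hout (n : ℕ) (s : K) (g : ℕ → T K B (q + 1) →ₗ[K] T K B (p + 1)) :
      ∑ i ∈ Finset.range n, ((-1 : K) ^ (i + 1)) • s • g i =
        s • ∑ i ∈ Finset.range n, ((-1 : K) ^ (i + 1)) • g i := by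
    rw [Finset.smul_sum]
    exact Finset.sum_congr rfl fun i _ => smul_comm _ _ _
  rw [deltaCv_eq, deltaH_eq, deltaH_eq, deltaCv_eq]
  simp only [map_add, map_sum, map_smul, LinearMap.comp_add, LinearMap.add_comp, smul_add,
    Finset.sum_add_distrib, LinearMap.comp_smul, LinearMap.smul_comp, hcl, hcr, hhl, hhr, hmid,
    deltaCvLeft_deltaHLeft, deltaCvLeft_deltaHRight, deltaCvRight_deltaHLeft,
    deltaCvRight_deltaHRight, hout, smul_comm ((-1 : K) ^ (q + 1)) ((-1 : K) ^ (p + 1))]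
  abel

end GBD
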